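/- Let α and β be finite types, P a transition matrix over α × β with strictly positive stationary probability vector μ, and γ ∈ [0,1). Let r : α × β → ℝ be a global reward, and let r_A : α → ℝ, r_B : β → ℝ satisfy ‖ r − (r_A ⊗ e + e ⊗ r_B) ‖_μ ≤ δ, ‖r_A‖_∞ ≤ R_A and ‖r_B‖_∞ ≤ R_B. Suppose there exist transition matrices M_A over α and M_B over β such that for every x : α → ℝ with ‖x‖_∞ ≤ 1, (1/2) ‖ P(x ⊗ e) − (M_A x) ⊗ e ‖_μ ≤ ε_A, and symmetrically for B with bound ε_B. Let P_A, P_B be the marginalized local transition matrices of P with respect to μ and set Q = (I − γP)^{-1} r, Q_A = (I − γP_A)^{-1} r_A, Q_B = (I − γP_B)^{-1} r_B. Then ‖ Q − (Q_A ⊗ e + e ⊗ Q_B) ‖_μ ≤ δ/(1 − γ) + 4γ (ε_A R_A + ε_B R_B) / (1 − γ)². -/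

import Mathlib

open Matrix

/-- A transition matrix: nonnegative entries, each row sums to 1. -/
def IsTransition {ι : Type*} [Fintype ι] (P : Matrix ι ι ℝ) : Prop :=
  (∀ i j, 0 ≤ P i j) ∧ ∀ i, ∑ j, P i j = 1

/-- The marginalized local transition matrix of agent `A`. -/
noncomputable def localA {α β : Type*} [Fintype α] [Fintype β]
    (P : Matrix (α × β) (α × β) ℝ) (μ : α × β → ℝ) : Matrix α α ℝ :=
  Matrix.of fun a a' =>
    ∑ b, (μ (a, b) / ∑ b', μ (a, b')) * ∑ b', P (a, b) (a', b')

/-- The marginalized local transition matrix of agent `B`. -/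
noncomputable def localB {α β : Type*} [Fintype α] [Fintype β]
    (P : Matrix (α × β) (α × β) ℝ) (μ : α × β → ℝ) : Matrix β β ℝ :=
  Matrix.of fun b b' =>
    ∑ a, (μ (a, b) / ∑ a', μ (a', b)) * ∑ a', P (a, b) (a', b')

theorem IsTransition.abs_mulVec_le {ι : Type*} [Fintype ι] {M : Matrix ι ι ℝ}
    (hM : IsTransition M) (x : ι → ℝ) (i : ι) : |M.mulVec x i| ≤ ∑ j, M i j * |x j| := by
  refine (Finset.abs_sum_le_sum_abs _ _).trans_eq (Finset.sum_congr rfl fun j _ => ?_)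
  rw [abs_mul, abs_of_nonneg (hM.1 i j)]

/-- A solution of the discounted fixed-point equation `x = y + γ M x` is bounded by the
discounted bound on `y`. -/
theorem IsTransition.abs_le_div_of_eq {ι : Type*} [Fintype ι] {M : Matrix ι ι ℝ}
    (hM : IsTransition M) {γ R : ℝ} (hγ0 : 0 ≤ γ) (hγ1 : γ < 1) {x y : ι → ℝ}
    (hxy : ∀ i, x i = y i + γ * M.mulVec x i) (hy : ∀ i, |y i| ≤ R) (i : ι) :
    |x i| ≤ R / (1 - γ) := by
  obtain ⟨k, -, hk⟩ := Finset.exists_max_image Finset.univ (fun j => |x j|) ⟨i, Finset.mem_univ i⟩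
  have hMx : |M.mulVec x k| ≤ |x k| := by
    refine (hM.abs_mulVec_le x k).trans ?_
    calc ∑ j, M k j * |x j| ≤ ∑ j, M k j * |x k| :=
          Finset.sum_le_sum fun j hj => mul_le_mul_of_nonneg_left (hk j hj) (hM.1 k j)
      _ = |x k| := by rw [← Finset.sum_mul, hM.2, one_mul]
  have hxk : |x k| ≤ R + γ * |x k| := by
    calc |x k| = |y k + γ * M.mulVec x k| := by rw [← hxy k]
      _ ≤ |y k| + |γ * M.mulVec x k| := abs_add_le _ _
      _ = |y k| + γ * |M.mulVec x k| := by rw [abs_mul, abs_of_nonneg hγ0]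
      _ ≤ R + γ * |x k| := add_le_add (hy k) (mul_le_mul_of_nonneg_left hMx hγ0)
  refine (hk i (Finset.mem_univ i)).trans ?_
  rw [le_div_iff₀ (by linarith)]
  linarith

theorem IsTransition.isUnit_one_sub_smul {ι : Type*} [Fintype ι] [DecidableEq ι]
    {M : Matrix ι ι ℝ} (hM : IsTransition M) {γ : ℝ} (hγ0 : 0 ≤ γ) (hγ1 : γ < 1) :
    IsUnit (1 - γ • M) := by
  rw [← Matrix.mulVec_injective_iff_isUnit]
  refine (injective_iff_map_eq_zero (Matrix.mulVecLin (1 - γ • M))).2 fun x hx => ?_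
  have hfix : ∀ i, x i = (0 : ι → ℝ) i + γ * M.mulVec x i := fun i => by
    have hi := congrFun hx i
    simp only [Matrix.mulVecLin_apply, Matrix.sub_mulVec, Matrix.one_mulVec, Matrix.smul_mulVec,
      Pi.sub_apply, Pi.smul_apply, smul_eq_mul, Pi.zero_apply] at hi ⊢
    linarith
  funext i
  simpa using hM.abs_le_div_of_eq hγ0 hγ1 hfix (R := 0) (by simp) i

/-- The Bellman equation for `(1 - γ M)⁻¹ y`. -/
theorem IsTransition.inv_mulVec_apply {ι : Type*} [Fintype ι] [DecidableEq ι]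
    {M : Matrix ι ι ℝ} (hM : IsTransition M) {γ : ℝ} (hγ0 : 0 ≤ γ) (hγ1 : γ < 1)
    (y : ι → ℝ) (i : ι) :
    ((1 - γ • M)⁻¹).mulVec y i = y i + γ * M.mulVec (((1 - γ • M)⁻¹).mulVec y) i := by
  have hdet := (Matrix.isUnit_iff_isUnit_det _).1 (hM.isUnit_one_sub_smul hγ0 hγ1)
  have hmul : (1 - γ • M).mulVec (((1 - γ • M)⁻¹).mulVec y) = y := by
    rw [Matrix.mulVec_mulVec, Matrix.mul_nonsing_inv _ hdet, Matrix.one_mulVec]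
  have hi := congrFun hmul i
  rw [Matrix.sub_mulVec, Matrix.one_mulVec, Matrix.smul_mulVec] at hi
  simp only [Pi.sub_apply, Pi.smul_apply, smul_eq_mul] at hi
  linarith

/-- A transition matrix is a contraction in the `L¹` norm of a stationary weight. -/
theorem IsTransition.sum_mul_abs_mulVec_le {ι : Type*} [Fintype ι] {M : Matrix ι ι ℝ}
    (hM : IsTransition M) {μ : ι → ℝ} (hμ : ∀ i, 0 ≤ μ i)
    (hstat : ∀ j, ∑ i, μ i * M i j = μ j) (x : ι → ℝ) :
    ∑ i, μ i * |M.mulVec x i| ≤ ∑ i, μ i * |x i| := by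
  calc ∑ i, μ i * |M.mulVec x i| ≤ ∑ i, μ i * ∑ j, M i j * |x j| :=
        Finset.sum_le_sum fun i _ => mul_le_mul_of_nonneg_left (hM.abs_mulVec_le x i) (hμ i)
    _ = ∑ j, ∑ i, μ i * M i j * |x j| := by
        simp only [Finset.mul_sum, ← mul_assoc]
        exact Finset.sum_comm
    _ = ∑ j, μ j * |x j| := by simp only [← Finset.sum_mul, hstat]

/-- The conditional mean given the first coordinate is, up to a factor `2`, an optimal
`L¹` approximation among functions of the first coordinate. -/
theorem sum_mul_abs_sub_condMean_le {α β : Type*} [Fintype α] [Fintype β]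
    {μ : α × β → ℝ} (hμ : ∀ p, 0 < μ p) (f : α × β → ℝ) (g : α → ℝ) :
    ∑ p, μ p * |f p - ∑ b, (μ (p.1, b) / ∑ b', μ (p.1, b')) * f (p.1, b)|
      ≤ 2 * ∑ p, μ p * |f p - g p.1| := by
  simp only [Fintype.sum_prod_type, Finset.mul_sum (a := (2 : ℝ))]
  refine Finset.sum_le_sum fun a _ => ?_
  rcases isEmpty_or_nonempty β with hβ | hβ
  · simp
  have hpos : 0 < ∑ b, μ (a, b) := Finset.sum_pos (fun b _ => hμ _) Finset.univ_nonempty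
  set m := ∑ b, (μ (a, b) / ∑ b', μ (a, b')) * f (a, b) with hm
  have hmean : (∑ b, μ (a, b)) * (g a - m) = ∑ b, μ (a, b) * (g a - f (a, b)) := by
    have hmul : (∑ b, μ (a, b)) * m = ∑ b, μ (a, b) * f (a, b) := by
      rw [hm, Finset.mul_sum]
      refine Finset.sum_congr rfl fun b _ => ?_
      field_simp
    rw [mul_sub, hmul, Finset.sum_mul, ← Finset.sum_sub_distrib]
    simp only [mul_sub]
  have hdev : (∑ b, μ (a, b)) * |g a - m| ≤ ∑ b, μ (a, b) * |f (a, b) - g a| := by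
    have habs : (∑ b, μ (a, b)) * |g a - m| = |(∑ b, μ (a, b)) * (g a - m)| := by
      rw [abs_mul, abs_of_pos hpos]
    rw [habs, hmean]
    refine (Finset.abs_sum_le_sum_abs _ _).trans_eq (Finset.sum_congr rfl fun b _ => ?_)
    rw [abs_mul, abs_of_pos (hμ _), abs_sub_comm]
  calc ∑ b, μ (a, b) * |f (a, b) - m|
      ≤ ∑ b, (μ (a, b) * |f (a, b) - g a| + μ (a, b) * |g a - m|) :=
        Finset.sum_le_sum fun b _ => by
          rw [← mul_add]
          exact mul_le_mul_of_nonneg_left (abs_sub_le _ _ _) (hμ _).le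
    _ = ∑ b, μ (a, b) * |f (a, b) - g a| + (∑ b, μ (a, b)) * |g a - m| := by
        rw [Finset.sum_add_distrib, Finset.sum_mul]
    _ ≤ 2 * ∑ b, μ (a, b) * |f (a, b) - g a| := by linarith
    _ = ∑ b, 2 * (μ (a, b) * |f (a, b) - g a|) := Finset.mul_sum _ _ _

theorem localA_mulVec {α β : Type*} [Fintype α] [Fintype β]
    (P : Matrix (α × β) (α × β) ℝ) (μ : α × β → ℝ) (x : α → ℝ) (a : α) :
    (localA P μ).mulVec x a =
      ∑ b, (μ (a, b) / ∑ b', μ (a, b')) * P.mulVec (fun q => x q.1) (a, b) := by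
  simp only [Matrix.mulVec, dotProduct, localA, Matrix.of_apply, Fintype.sum_prod_type,
    Finset.sum_mul, Finset.mul_sum]
  rw [Finset.sum_comm]
  simp only [mul_assoc]

theorem isTransition_localA {α β : Type*} [Fintype α] [Fintype β] [Nonempty β]
    {P : Matrix (α × β) (α × β) ℝ} (hP : IsTransition P)
    {μ : α × β → ℝ} (hμ : ∀ p, 0 < μ p) : IsTransition (localA P μ) := by
  refine ⟨fun a a' => Finset.sum_nonneg fun b _ => mul_nonneg
    (div_nonneg (hμ _).le (Finset.sum_nonneg fun b' _ => (hμ _).le))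
    (Finset.sum_nonneg fun b' _ => hP.1 _ _), fun a => ?_⟩
  have hpos : 0 < ∑ b, μ (a, b) := Finset.sum_pos (fun b _ => hμ _) Finset.univ_nonempty
  have hsum := localA_mulVec P μ (fun _ => 1) a
  simp only [Matrix.mulVec, dotProduct, mul_one, hP.2] at hsum
  rw [hsum, ← Finset.sum_div, div_self hpos.ne']

/-- Replacing `P` by its marginalized local transition matrix costs at most twice the cost of
replacing it by any other local matrix. -/
theorem sum_mul_abs_mulVec_sub_localA_le {α β : Type*} [Fintype α] [Fintype β]
    (P : Matrix (α × β) (α × β) ℝ) {μ : α × β → ℝ} (hμ : ∀ p, 0 < μ p) {ε c : ℝ} (hc : 0 ≤ c)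
    (M : Matrix α α ℝ)
    (hM : ∀ x : α → ℝ, (∀ a, |x a| ≤ 1) →
      (1 / 2 : ℝ) * ∑ p, μ p * |P.mulVec (fun q => x q.1) p - (M.mulVec x) p.1| ≤ ε)
    (x : α → ℝ) (hx : ∀ a, |x a| ≤ c) :
    ∑ p, μ p * |P.mulVec (fun q => x q.1) p - (localA P μ).mulVec x p.1| ≤ 4 * ε * c := by
  obtain ⟨z, hz, rfl⟩ : ∃ z : α → ℝ, (∀ a, |z a| ≤ 1) ∧ x = c • z := by
    rcases hc.eq_or_lt with rfl | hc
    · exact ⟨0, by simp, funext fun a => by simpa using hx a⟩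
    · refine ⟨fun a => x a / c, fun a => ?_, funext fun a => ?_⟩
      · rw [abs_div, abs_of_pos hc]
        exact (div_le_one hc).2 (hx a)
      · simp only [Pi.smul_apply, smul_eq_mul]
        field_simp
  have hlift : (fun q : α × β => (c • z) q.1) = c • fun q : α × β => z q.1 := rfl
  have hmean := sum_mul_abs_sub_condMean_le hμ (P.mulVec fun q => z q.1) (M.mulVec z)
  simp only [← localA_mulVec] at hmean
  calc ∑ p, μ p * |P.mulVec (fun q => (c • z) q.1) p - (localA P μ).mulVec (c • z) p.1|
      = c * ∑ p, μ p * |P.mulVec (fun q => z q.1) p - (localA P μ).mulVec z p.1| := by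
        rw [hlift, Matrix.mulVec_smul, Matrix.mulVec_smul, Finset.mul_sum]
        refine Finset.sum_congr rfl fun p _ => ?_
        simp only [Pi.smul_apply, smul_eq_mul]
        rw [← mul_sub, abs_mul, abs_of_nonneg hc]
        ring
    _ ≤ c * (4 * ε) := mul_le_mul_of_nonneg_left (by linarith [hM z hz]) hc
    _ = 4 * ε * c := mul_comm _ _

theorem IsTransition.submatrix_equiv {ι κ : Type*} [Fintype ι] [Fintype κ] {M : Matrix ι ι ℝ}
    (hM : IsTransition M) (e : κ ≃ ι) : IsTransition (M.submatrix e e) :=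
  ⟨fun i j => hM.1 (e i) (e j), fun i => (e.sum_comp (M (e i))).trans (hM.2 (e i))⟩

theorem localB_eq_localA_swap {α β : Type*} [Fintype α] [Fintype β]
    (P : Matrix (α × β) (α × β) ℝ) (μ : α × β → ℝ) :
    localB P μ = localA (P.submatrix (Equiv.prodComm β α) (Equiv.prodComm β α))
      (μ ∘ Equiv.prodComm β α) := rfl

theorem isTransition_localB {α β : Type*} [Fintype α] [Fintype β] [Nonempty α]
    {P : Matrix (α × β) (α × β) ℝ} (hP : IsTransition P)
    {μ : α × β → ℝ} (hμ : ∀ p, 0 < μ p) : IsTransition (localB P μ) := by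
  rw [localB_eq_localA_swap]
  exact isTransition_localA (hP.submatrix_equiv _) fun p => hμ _

theorem sum_mul_abs_mulVec_sub_localB_le {α β : Type*} [Fintype α] [Fintype β]
    (P : Matrix (α × β) (α × β) ℝ) {μ : α × β → ℝ} (hμ : ∀ p, 0 < μ p) {ε c : ℝ} (hc : 0 ≤ c)
    (M : Matrix β β ℝ)
    (hM : ∀ y : β → ℝ, (∀ b, |y b| ≤ 1) →
      (1 / 2 : ℝ) * ∑ p, μ p * |P.mulVec (fun q => y q.2) p - (M.mulVec y) p.2| ≤ ε)
    (y : β → ℝ) (hy : ∀ b, |y b| ≤ c) :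
    ∑ p, μ p * |P.mulVec (fun q => y q.2) p - (localB P μ).mulVec y p.2| ≤ 4 * ε * c := by
  set e := Equiv.prodComm β α
  have hswap : ∀ x : β → ℝ, (P.submatrix e e).mulVec (fun q => x q.1) =
      P.mulVec (fun q => x q.2) ∘ e := fun x => by
    rw [Matrix.submatrix_mulVec_equiv]
    rfl
  have hsum : ∀ (N : Matrix β β ℝ) (x : β → ℝ),
      ∑ p, (μ ∘ e) p * |(P.submatrix e e).mulVec (fun q => x q.1) p - N.mulVec x p.1| =
        ∑ p, μ p * |P.mulVec (fun q => x q.2) p - N.mulVec x p.2| := fun N x => by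
    rw [hswap]
    exact e.sum_comp fun p => μ p * |P.mulVec (fun q => x q.2) p - N.mulVec x p.2|
  rw [localB_eq_localA_swap, ← hsum]
  refine sum_mul_abs_mulVec_sub_localA_le _ (fun p => hμ _) hc M (fun x hx => ?_) y hy
  exact (congrArg ((1 / 2 : ℝ) * ·) (hsum M x)).trans_le (hM x hx)

/-- Fully cooperative setting: the `μ`-norm decomposition error of a global (possibly
non-decomposable) reward is bounded by the reward-entanglement `δ/(1−γ)` term plus the
transition-entanglement `4γ(ε_A R_A + ε_B R_B)/(1−γ)²` term. -/
theorem stmt18 {α β : Type*} [Fintype α] [Fintype β] [DecidableEq α] [DecidableEq β]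
    (P : Matrix (α × β) (α × β) ℝ) (hP : IsTransition P)
    (μ : α × β → ℝ) (hμpos : ∀ p, 0 < μ p) (hμsum : ∑ p, μ p = 1)
    (hstat : ∀ q, ∑ p, μ p * P p q = μ q)
    (γ RA RB εA εB δ : ℝ) (hγ0 : 0 ≤ γ) (hγ1 : γ < 1)
    (r : α × β → ℝ) (rA : α → ℝ) (rB : β → ℝ)
    (hδ : ∑ p, μ p * |r p - (rA p.1 + rB p.2)| ≤ δ)
    (hrA : ∀ a, |rA a| ≤ RA) (hrB : ∀ b, |rB b| ≤ RB)
    (MA : Matrix α α ℝ) (hMA : IsTransition MA)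
    (MB : Matrix β β ℝ) (hMB : IsTransition MB)
    (hATVA : ∀ x : α → ℝ, (∀ a, |x a| ≤ 1) →
      (1 / 2 : ℝ) * ∑ p, μ p * |P.mulVec (fun q => x q.1) p - (MA.mulVec x) p.1| ≤ εA)
    (hATVB : ∀ y : β → ℝ, (∀ b, |y b| ≤ 1) →
      (1 / 2 : ℝ) * ∑ p, μ p * |P.mulVec (fun q => y q.2) p - (MB.mulVec y) p.2| ≤ εB) :
    ∑ p, μ p * |((1 - γ • P)⁻¹).mulVec r p
            - ((((1 - γ • localA P μ)⁻¹).mulVec rA) p.1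
              + (((1 - γ • localB P μ)⁻¹).mulVec rB) p.2)|
        ≤ δ / (1 - γ) + 4 * γ * (εA * RA + εB * RB) / (1 - γ) ^ 2 := by
  obtain ⟨hα, hβ⟩ : Nonempty α ∧ Nonempty β := by
    rw [← nonempty_prod]
    by_contra hempty
    rw [not_nonempty_iff] at hempty
    simp at hμsum
  have h1γ : 0 < 1 - γ := by linarith
  have hRA : 0 ≤ RA := (abs_nonneg _).trans (hrA hα.some)
  have hRB : 0 ≤ RB := (abs_nonneg _).trans (hrB hβ.some)
  have hQ := hP.inv_mulVec_apply hγ0 hγ1 r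
  have hQA := (isTransition_localA hP hμpos).inv_mulVec_apply hγ0 hγ1 rA
  have hQB := (isTransition_localB hP hμpos).inv_mulVec_apply hγ0 hγ1 rB
  have hQA_le := (isTransition_localA hP hμpos).abs_le_div_of_eq hγ0 hγ1 hQA hrA
  have hQB_le := (isTransition_localB hP hμpos).abs_le_div_of_eq hγ0 hγ1 hQB hrB
  set Q := ((1 - γ • P)⁻¹).mulVec r
  set QA := ((1 - γ • localA P μ)⁻¹).mulVec rA
  set QB := ((1 - γ • localB P μ)⁻¹).mulVec rB
  have hTA := sum_mul_abs_mulVec_sub_localA_le P hμpos (div_nonneg hRA h1γ.le) MA hATVA QA hQA_le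
  have hTB := sum_mul_abs_mulVec_sub_localB_le P hμpos (div_nonneg hRB h1γ.le) MB hATVB QB hQB_le
  set D : α × β → ℝ := fun p => Q p - (QA p.1 + QB p.2)
  have hPD : ∀ p, P.mulVec D p =
      P.mulVec Q p - (P.mulVec (fun q => QA q.1) p + P.mulVec (fun q => QB q.2) p) := fun p => by
    have hsplit : D = Q - ((fun q => QA q.1) + fun q => QB q.2) := rfl
    rw [hsplit, Matrix.mulVec_sub, Matrix.mulVec_add]
    rfl
  have hDeq : ∀ p, D p = (r p - (rA p.1 + rB p.2))
      + γ * (P.mulVec (fun q => QA q.1) p - (localA P μ).mulVec QA p.1)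
      + γ * (P.mulVec (fun q => QB q.2) p - (localB P μ).mulVec QB p.2)
      + γ * P.mulVec D p := fun p => by
    have hDp : D p = Q p - (QA p.1 + QB p.2) := rfl
    rw [hPD, hDp]
    linarith [hQ p, hQA p.1, hQB p.2]
  have hpoint : ∀ p, μ p * |D p| ≤ μ p * |r p - (rA p.1 + rB p.2)|
      + γ * (μ p * |P.mulVec (fun q => QA q.1) p - (localA P μ).mulVec QA p.1|)
      + γ * (μ p * |P.mulVec (fun q => QB q.2) p - (localB P μ).mulVec QB p.2|)
      + γ * (μ p * |P.mulVec D p|) := fun p => by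
    have htri : ∀ a b c d : ℝ, |a + γ * b + γ * c + γ * d|
        ≤ |a| + γ * |b| + γ * |c| + γ * |d| := fun a b c d => by
      have habs : ∀ t : ℝ, |γ * t| = γ * |t| := fun t => by rw [abs_mul, abs_of_nonneg hγ0]
      rw [← habs, ← habs, ← habs]
      exact (abs_add_le _ _).trans (add_le_add_left (abs_add_three _ _ _) _)
    rw [hDeq p]
    refine (mul_le_mul_of_nonneg_left (htri _ _ _ _) (hμpos p).le).trans_eq ?_
    ring
  have hsum := Finset.sum_le_sum fun p (_ : p ∈ Finset.univ) => hpoint p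
  simp only [Finset.sum_add_distrib, ← Finset.mul_sum] at hsum
  have hcontr := hP.sum_mul_abs_mulVec_le (fun p => (hμpos p).le) hstat D
  have hbound : (1 - γ) * ∑ p, μ p * |D p| ≤
      δ + γ * (4 * εA * (RA / (1 - γ))) + γ * (4 * εB * (RB / (1 - γ))) := by
    linarith [mul_le_mul_of_nonneg_left hcontr hγ0, mul_le_mul_of_nonneg_left hTA hγ0,
      mul_le_mul_of_nonneg_left hTB hγ0]
  calc ∑ p, μ p * |D p|
      ≤ (δ + γ * (4 * εA * (RA / (1 - γ))) + γ * (4 * εB * (RB / (1 - γ)))) / (1 - γ) := by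
        rw [le_div_iff₀ h1γ]
        linarith
    _ = δ / (1 - γ) + 4 * γ * (εA * RA + εB * RB) / (1 - γ) ^ 2 := by
        field_simp
        ring
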